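/- Let q ≥ 1, let a₁, …, a_q be real numbers linearly independent over ℚ, let A be the 2q×2q block-diagonal skew-symmetric matrix whose j-th 2×2 diagonal block is [[0, −a_j],[a_j, 0]], let C₀ = (1, 0, 1, 0, …, 1, 0) and C₁ = (0, 1, 0, 1, …, 0, 1) be 1×2q row matrices, and let d₀, d₁ > 0. Then the switched system defined by the (2q+1)×(2q+1) block matrices B₀ = [[A, −C₀ᵀ],[C₀, −d₀]] and B₁ = [[A, −C₁ᵀ],[C₁, −d₁]] is GUAS. -/

import Mathlib

open Matrix MeasureTheory

noncomputable section

/-- The switched system defined by `{B₀, B₁}` is GUAS: for every measurable switching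
law `u : [0,∞) → {0,1}` and every initial condition, the solution of `ẋ = B_{u(t)}x`
tends to `0` at `+∞`. -/
def IsGUAS {n : Type*} [Fintype n] [DecidableEq n] (B₀ B₁ : Matrix n n ℝ) : Prop :=
  ∀ u : ℝ → Fin 2, Measurable u →
    ∀ X : EuclideanSpace ℝ n, ∀ Φ : ℝ → EuclideanSpace ℝ n, Continuous Φ →
      (∀ t : ℝ, 0 ≤ t →
        Φ t = X + ∫ s in (0:ℝ)..t, Matrix.toEuclideanLin (![B₀, B₁] (u s)) (Φ s)) →
      Filter.Tendsto Φ Filter.atTop (nhds 0)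

/-- The `2q×2q` block-diagonal skew-symmetric matrix whose `j`-th `2×2` diagonal block
is `[[0, -a_j],[a_j, 0]]`, indexed by `Fin q × Fin 2`. -/
def blockDiagRot {q : ℕ} (a : Fin q → ℝ) :
    Matrix (Fin q × Fin 2) (Fin q × Fin 2) ℝ :=
  Matrix.of fun p p' =>
    if p.1 = p'.1 then !![0, -(a p.1); a p.1, 0] p.2 p'.2 else 0

/-- The row matrix `C₀ = (1, 0, 1, 0, …, 1, 0)`. -/
def rowC₀ {q : ℕ} : Matrix (Fin 1) (Fin q × Fin 2) ℝ :=
  Matrix.of fun _ p => if p.2 = 0 then 1 else 0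

/-- The row matrix `C₁ = (0, 1, 0, 1, …, 0, 1)`. -/
def rowC₁ {q : ℕ} : Matrix (Fin 1) (Fin q × Fin 2) ℝ :=
  Matrix.of fun _ p => if p.2 = 1 then 1 else 0

/-!
The energy `‖x‖²` decreases at rate `2 d_k y²`, where `y` is the last coordinate, so trajectories
are bounded and Barbalat's lemma gives `y → 0`. Hence, in the limit, each pair `(x_{j,0}, x_{j,1})`,
read as a complex number `z_j`, rotates freely at frequency `a_j`, whatever the switching law does:
the cluster set of a trajectory contains, with a point of phases `z`, points of phases
`e^{i a_j τ} z_j` for all `τ ≥ 0`.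

Suppose `z ≠ 0`, and let `s(τ) = ∑ j, e^{i a_j τ} z_j`. Then `Im s(τ)² > 0` for some `τ ≥ 0`.
Otherwise `Im s²`, being nonpositive with mean zero, would have only zero Fourier–Bohr coefficients,
but the one at frequency `2 a_p` is `z_p² / 2i`, where `p` maximises `|a_p|` subject to `z_p ≠ 0`.
At the corresponding cluster point the two modes give `ẏ` the values `Re s` and `Im s`, which are
nonzero and of the same sign. So whichever mode is active, `y` changes by a fixed amount each time
the trajectory passes nearby, contradicting `y → 0`. Therefore `0` is the only cluster point.
-/

open Filter Topology Set
open scoped NNReal RealInnerProductSpace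

section ExponentialSums

variable {ι : Type*} [Fintype ι]

/-- The exponential sum `t ↦ ∑ i, cᵢ e^{i ωᵢ t}` with real frequencies `ω` and complex
coefficients `c`. -/
def expSum (ω : ι → ℝ) (c : ι → ℂ) (t : ℝ) : ℂ :=
  ∑ i, c i * Complex.exp (Complex.I * ω i * t)

theorem continuous_expSum (ω : ι → ℝ) (c : ι → ℂ) : Continuous (expSum ω c) := by
  unfold expSum
  fun_prop

theorem expSum_mul_expSum (ω : ι → ℝ) (c : ι → ℂ) (t : ℝ) :
    expSum ω c t * expSum ω c t =
      expSum (fun p : ι × ι => ω p.1 + ω p.2) (fun p => c p.1 * c p.2) t := by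
  simp only [expSum, Finset.sum_mul_sum, Fintype.sum_prod_type]
  refine Finset.sum_congr rfl fun j _ => Finset.sum_congr rfl fun k _ => ?_
  rw [mul_mul_mul_comm, ← Complex.exp_add]
  push_cast
  ring_nf

theorem exp_mul_expSum (l : ℝ) (ω : ι → ℝ) (c : ι → ℂ) (t : ℝ) :
    Complex.exp (Complex.I * l * t) * expSum ω c t = expSum (fun i => l + ω i) c t := by
  rw [expSum, Finset.mul_sum]
  refine Finset.sum_congr rfl fun i _ => ?_
  rw [mul_left_comm, ← Complex.exp_add]
  push_cast
  ring_nf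

theorem conj_expSum (ω : ι → ℝ) (c : ι → ℂ) (t : ℝ) :
    starRingEnd ℂ (expSum ω c t) = expSum (fun i => -ω i) (fun i => starRingEnd ℂ (c i)) t := by
  simp [expSum, ← Complex.exp_conj]

theorem tendsto_average_exp (l : ℝ) :
    Tendsto (fun T : ℝ => T⁻¹ • ∫ t in (0 : ℝ)..T, Complex.exp (Complex.I * l * t)) atTop
      (𝓝 (if l = 0 then 1 else 0)) := by
  split_ifs with hl
  · refine tendsto_const_nhds.congr' ?_
    filter_upwards [eventually_gt_atTop 0] with T hT
    simp [hl, hT.ne']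
  · have hIl : Complex.I * l ≠ 0 := mul_ne_zero Complex.I_ne_zero (Complex.ofReal_ne_zero.2 hl)
    refine squeeze_zero_norm (a := fun T => |T⁻¹| * (2 / |l|)) (fun T => ?_)
      (by simpa using tendsto_inv_atTop_zero.abs.mul_const (2 / |l|))
    have hexp : ‖Complex.exp (Complex.I * l * T)‖ = 1 := by
      rw [mul_assoc, ← Complex.ofReal_mul, Complex.norm_exp_I_mul_ofReal]
    rw [integral_exp_mul_complex hIl, norm_smul, norm_div, norm_mul, Complex.norm_I, one_mul,
      Complex.norm_real, Real.norm_eq_abs, Real.norm_eq_abs]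
    gcongr
    refine (norm_sub_le _ _).trans_eq ?_
    rw [hexp, Complex.ofReal_zero, mul_zero, Complex.exp_zero, norm_one, one_add_one_eq_two]

theorem tendsto_average_expSum (ω : ι → ℝ) (c : ι → ℂ) :
    Tendsto (fun T : ℝ => T⁻¹ • ∫ t in (0 : ℝ)..T, expSum ω c t) atTop
      (𝓝 (∑ i with ω i = 0, c i)) := by
  have hsum := tendsto_finsetSum Finset.univ fun i _ =>
    (tendsto_average_exp (ω i)).const_mul (c i)
  simp only [mul_ite, mul_one, mul_zero, ← Finset.sum_filter] at hsum
  refine hsum.congr fun T => ?_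
  simp only [expSum]
  rw [intervalIntegral.integral_finsetSum
    fun i _ => Continuous.intervalIntegrable (by fun_prop) 0 T]
  simp only [intervalIntegral.integral_const_mul, Finset.smul_sum, mul_smul_comm]

theorem tendsto_average_exp_mul_im_expSum (ω : ι → ℝ) (c : ι → ℂ) (l : ℝ) :
    Tendsto (fun T : ℝ => T⁻¹ • ∫ t in (0 : ℝ)..T,
        Complex.exp (Complex.I * (-l : ℝ) * t) * (expSum ω c t).im) atTop
      (𝓝 ((∑ i with ω i = l, c i - starRingEnd ℂ (∑ i with ω i = -l, c i)) /
        (2 * Complex.I))) := by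
  have hP := tendsto_average_expSum (fun i => -l + ω i) c
  have hQ := tendsto_average_expSum (fun i => -l + -ω i) fun i => starRingEnd ℂ (c i)
  simp only [neg_add_eq_zero, eq_comm (a := l), neg_eq_iff_eq_neg] at hP hQ
  rw [map_sum]
  refine ((hP.sub hQ).div_const (2 * Complex.I)).congr fun T => ?_
  rw [← smul_sub, ← intervalIntegral.integral_sub
    ((continuous_expSum _ _).intervalIntegrable 0 T)
    ((continuous_expSum _ _).intervalIntegrable 0 T), smul_div_assoc,
    ← intervalIntegral.integral_div]
  congr 2 with t
  rw [← exp_mul_expSum, ← exp_mul_expSum (-l) fun i => -ω i, ← conj_expSum, ← mul_sub,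
    Complex.im_eq_sub_conj, mul_div_assoc]

theorem tendsto_average_mul_of_nonpos {g : ℝ → ℝ} {e : ℝ → ℂ} (hg : ∀ t, 0 ≤ t → g t ≤ 0)
    (he : ∀ t, ‖e t‖ ≤ 1) (hgi : Continuous g)
    (hmean : Tendsto (fun T : ℝ => T⁻¹ * ∫ t in (0 : ℝ)..T, g t) atTop (𝓝 0)) :
    Tendsto (fun T : ℝ => T⁻¹ • ∫ t in (0 : ℝ)..T, e t * g t) atTop (𝓝 0) := by
  refine squeeze_zero_norm' ?_ (by simpa using hmean.neg)
  filter_upwards [eventually_ge_atTop 0] with T hT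
  rw [norm_smul, Real.norm_of_nonneg (inv_nonneg.2 hT), ← mul_neg,
    ← intervalIntegral.integral_neg]
  gcongr
  refine intervalIntegral.norm_integral_le_of_norm_le hT (.of_forall fun t ht => ?_)
    (hgi.neg.intervalIntegrable 0 T)
  rw [norm_mul, Complex.norm_real, Real.norm_of_nonpos (hg t ht.1.le)]
  exact mul_le_of_le_one_left (neg_nonneg.2 (hg t ht.1.le)) (he t)

theorem exists_im_expSum_pos {ω : ι → ℝ} {c : ι → ℂ} (hω : ∀ i, ω i ≠ 0) {l : ℝ}
    (hl : ∑ i with ω i = l, c i ≠ starRingEnd ℂ (∑ i with ω i = -l, c i)) :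
    ∃ t, 0 ≤ t ∧ 0 < (expSum ω c t).im := by
  by_contra! hneg
  have hmean : Tendsto (fun T : ℝ => T⁻¹ * ∫ t in (0 : ℝ)..T, (expSum ω c t).im) atTop
      (𝓝 0) := by
    have h := (Complex.continuous_re.tendsto _).comp (tendsto_average_exp_mul_im_expSum ω c 0)
    simpa [hω, Function.comp_def, intervalIntegral.integral_ofReal] using h
  have hexp (t : ℝ) : ‖Complex.exp (Complex.I * (-l : ℝ) * t)‖ ≤ 1 := by
    rw [mul_assoc, ← Complex.ofReal_mul, Complex.norm_exp_I_mul_ofReal]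
  have hzero := tendsto_average_mul_of_nonpos hneg hexp
    (Complex.continuous_im.comp (continuous_expSum ω c)) hmean
  have hcoeff := tendsto_nhds_unique (tendsto_average_exp_mul_im_expSum ω c l) hzero
  rw [div_eq_zero_iff, sub_eq_zero] at hcoeff
  exact hcoeff.elim hl (mul_ne_zero two_ne_zero Complex.I_ne_zero)

theorem eq_and_eq_of_add_eq_two_mul {x y z : ℝ} (hx : |x| ≤ |z|) (hy : |y| ≤ |z|)
    (h : x + y = 2 * z) : x = z ∧ y = z := by
  rcases abs_cases z with hz | hz <;> rw [hz.1, abs_le] at hx hy <;> constructor <;> linarith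

theorem exists_im_expSum_sq_pos {ω : ι → ℝ} (hinj : Function.Injective fun i => |ω i|)
    (hω : ∀ i, ω i ≠ 0) {c : ι → ℂ} (hc : c ≠ 0) :
    ∃ t, 0 ≤ t ∧ 0 < (expSum ω c t * expSum ω c t).im := by
  classical
  have hsum : ∀ j k, ω j + ω k ≠ 0 := fun j k h => by
    have hjk : j = k := hinj (by simp only [eq_neg_of_add_eq_zero_left h, abs_neg])
    subst hjk
    exact hω j (add_self_eq_zero.1 h)
  obtain ⟨p, hp, hmax⟩ : ∃ p, c p ≠ 0 ∧ ∀ j, c j ≠ 0 → |ω j| ≤ |ω p| := by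
    have hne : (Finset.univ.filter fun j => c j ≠ 0).Nonempty := by
      obtain ⟨j, hj⟩ := Function.ne_iff.1 hc
      exact ⟨j, by simpa using hj⟩
    simpa using Finset.exists_max_image _ (fun j => |ω j|) hne
  have htop : ∑ i : ι × ι with ω i.1 + ω i.2 = 2 * ω p, c i.1 * c i.2 = c p * c p := by
    refine Finset.sum_eq_single_of_mem (p, p) (by simp [two_mul]) fun i hi hip => ?_
    by_contra hcc
    obtain ⟨h₁, h₂⟩ := eq_and_eq_of_add_eq_two_mul (hmax _ (left_ne_zero_of_mul hcc))
      (hmax _ (right_ne_zero_of_mul hcc)) (Finset.mem_filter.1 hi).2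
    exact hip (Prod.ext (hinj (congrArg abs h₁)) (hinj (congrArg abs h₂)))
  have hbot : ∑ i : ι × ι with ω i.1 + ω i.2 = -(2 * ω p), c i.1 * c i.2 = 0 := by
    refine Finset.sum_eq_zero fun i hi => ?_
    by_contra hcc
    have h₁ := (eq_and_eq_of_add_eq_two_mul (z := -ω p)
      (by simpa using hmax _ (left_ne_zero_of_mul hcc))
      (by simpa using hmax _ (right_ne_zero_of_mul hcc))
      (by simpa using (Finset.mem_filter.1 hi).2)).1
    exact hsum i.1 p (eq_neg_iff_add_eq_zero.1 h₁)
  simp only [expSum_mul_expSum]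
  refine exists_im_expSum_pos (fun i => hsum i.1 i.2) (l := 2 * ω p) ?_
  rw [htop, hbot, map_zero]
  exact mul_self_ne_zero.2 hp

end ExponentialSums

section Calculus

variable {F : Type*} [NormedAddCommGroup F]

theorem locallyIntegrable_switch {κ : Type*} [Finite κ] [MeasurableSpace κ]
    [MeasurableSingletonClass κ] {u : ℝ → κ} (hu : Measurable u) {g : κ → ℝ → F}
    (hg : ∀ k, Continuous (g k)) :
    LocallyIntegrable (fun r => g (u r) r) := by
  have := Fintype.ofFinite κ
  have hsum : (fun r => g (u r) r) = ∑ k, (u ⁻¹' {k}).indicator (g k) := by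
    funext r
    rw [Finset.sum_apply, Finset.sum_eq_single_of_mem (u r) (Finset.mem_univ _) fun k _ hk => ?_]
    · exact (indicator_of_mem (s := u ⁻¹' {u r}) rfl _).symm
    · exact indicator_of_notMem (s := u ⁻¹' {k}) (fun h => hk (Eq.symm h)) _
  rw [hsum]
  exact locallyIntegrable_finsetSum' _ fun k _ =>
    (hg k).locallyIntegrable.indicator (hu (measurableSet_singleton k))

theorem intervalIntegrable_switch {κ : Type*} [Finite κ] [MeasurableSpace κ]
    [MeasurableSingletonClass κ] {u : ℝ → κ} (hu : Measurable u) {g : κ → ℝ → F}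
    (hg : ∀ k, Continuous (g k)) (s t : ℝ) :
    IntervalIntegrable (fun r => g (u r) r) volume s t :=
  intervalIntegrable_iff.2 <| ((locallyIntegrable_switch hu hg).integrableOn_isCompact
    isCompact_uIcc).mono_set uIoc_subset_uIcc

variable [NormedSpace ℝ F]

theorem tendsto_intervalIntegral_add_const_zero {f : ℝ → F} (hf : IntegrableOn f (Ioi 0))
    {h : ℝ} (hh : 0 ≤ h) : Tendsto (fun t => ∫ r in t..t + h, f r) atTop (𝓝 0) := by
  have hloc {t : ℝ} (ht : 0 ≤ t) : IntervalIntegrable f volume 0 t :=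
    (intervalIntegrable_iff_integrableOn_Ioc_of_le ht).2 (hf.mono_set Ioc_subset_Ioi_self)
  have hdiff := (intervalIntegral_tendsto_integral_Ioi 0 hf
    (tendsto_atTop_add_const_right _ h tendsto_id)).sub
    (intervalIntegral_tendsto_integral_Ioi 0 hf tendsto_id)
  rw [sub_self] at hdiff
  refine hdiff.congr' ?_
  filter_upwards [eventually_ge_atTop 0] with t ht
  exact intervalIntegral.integral_interval_sub_left (hloc (add_nonneg ht hh)) (hloc ht)

variable [CompleteSpace F]

theorem integral_eq_sub_of_lipschitzOnWith {f f' : ℝ → F} {a b : ℝ} {K : ℝ≥0}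
    (hf : LipschitzOnWith K f (uIcc a b)) (hf' : IntervalIntegrable f' volume a b)
    (hderiv : ∀ᵐ x, x ∈ uIoc a b → HasDerivAt f (f' x) x) :
    ∫ x in a..b, f' x = f b - f a := by
  refine SeparatingDual.eq_iff_forall_dual_eq (R := ℝ).2 fun g => ?_
  have hgf := (g.lipschitz.comp_lipschitzOnWith hf).absolutelyContinuousOnInterval
  rw [← g.intervalIntegral_comp_comm hf', map_sub]
  refine (intervalIntegral.integral_congr_ae ?_).trans hgf.integral_deriv_eq_sub
  filter_upwards [hderiv] with x hx hmem
  exact ((g.hasFDerivAt.comp_hasDerivAt x (hx hmem)).deriv).symm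

/-- Barbalat's lemma. -/
theorem tendsto_zero_of_uniformContinuousOn_of_integrableOn {f : ℝ → F}
    (hf : UniformContinuousOn f (Ici 0)) (hint : IntegrableOn f (Ioi 0)) :
    Tendsto f atTop (𝓝 0) := by
  refine Metric.tendsto_nhds.2 fun ε hε => ?_
  obtain ⟨δ, hδ, hfδ⟩ := Metric.uniformContinuousOn_iff.1 hf (ε / 2) (half_pos hε)
  obtain ⟨h, hh, hhδ⟩ := exists_between hδ
  have hlim := tendsto_intervalIntegral_add_const_zero hint hh.le
  filter_upwards [eventually_ge_atTop 0,
    Metric.tendsto_nhds.1 hlim _ (mul_pos (half_pos hε) hh)] with t ht hsmall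
  rw [dist_zero_right] at hsmall ⊢
  have hth : t ≤ t + h := le_add_of_nonneg_right hh.le
  have hloc : IntervalIntegrable f volume t (t + h) :=
    (hf.continuousOn.mono
      (uIcc_of_le hth ▸ fun _ hr => ht.trans hr.1)).intervalIntegrable
  have hosc : ‖∫ r in t..t + h, (f t - f r)‖ ≤ ε / 2 * |t + h - t| := by
    refine intervalIntegral.norm_integral_le_of_norm_le_const fun r hr => ?_
    rw [uIoc_of_le hth] at hr
    rw [← dist_eq_norm]
    refine (hfδ t ht r (ht.trans hr.1.le) ?_).le
    rw [dist_comm, Real.dist_eq, abs_of_pos (sub_pos.2 hr.1)]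
    linarith [hr.2]
  rw [intervalIntegral.integral_sub intervalIntegrable_const hloc, intervalIntegral.integral_const,
    add_sub_cancel_left, abs_of_pos hh] at hosc
  refine lt_of_mul_lt_mul_left ?_ hh.le
  calc h * ‖f t‖ = ‖h • f t‖ := by rw [norm_smul, Real.norm_of_nonneg hh.le]
    _ ≤ ‖h • f t - ∫ r in t..t + h, f r‖ + ‖∫ r in t..t + h, f r‖ := norm_le_norm_sub_add _ _
    _ < ε / 2 * h + ε / 2 * h := add_lt_add_of_le_of_lt hosc hsmall
    _ = h * ε := by ring

end Calculus

theorem exists_mapClusterPt_prodMk_shift {X : Type*} [TopologicalSpace X] {K : Set X}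
    (hK : IsCompact K) {f : ℝ → X} (hf : ∀ᶠ t in atTop, f t ∈ K) {x : X}
    (hx : MapClusterPt x atTop f) (τ : ℝ) :
    ∃ x', MapClusterPt x' atTop f ∧ MapClusterPt (x, x') atTop fun t => (f t, f (t + τ)) := by
  obtain ⟨U, hU, hxU⟩ := mapClusterPt_iff_ultrafilter.1 hx
  have hshift : Tendsto (· + τ) (U : Filter ℝ) atTop :=
    (tendsto_atTop_add_const_right _ τ tendsto_id).mono_left hU
  obtain ⟨x', -, hx'⟩ := hK.ultrafilter_le_nhds (U.map fun t => f (t + τ))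
    (le_principal_iff.2 (hshift.eventually hf))
  exact ⟨x', .of_comp hshift (Tendsto.mapClusterPt hx'),
    .mono (hxU.prodMk_nhds hx').mapClusterPt hU⟩

theorem apply_eq_of_mapClusterPt_of_tendsto {α X Y : Type*} [TopologicalSpace X]
    [TopologicalSpace Y] [T2Space Y] {l : Filter α} {f : α → X} {g : X → Y} {x : X} {y : Y}
    (hx : MapClusterPt x l f) (hg : ContinuousAt g x) (hy : Tendsto (fun a => g (f a)) l (𝓝 y)) :
    g x = y :=
  eq_of_nhds_neBot ((hx.continuousAt_comp hg).clusterPt.mono hy)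

/-- `Φ` solves the switched system `ẋ = L (u t) x` on `[0, ∞)` in the integrated sense, where the
measurable switching law `u` selects one of the modes `L k` at each time. Values of `Φ` at negative
times are unconstrained apart from continuity. -/
structure IsTrajectory {κ E : Type*} [MeasurableSpace κ] [NormedAddCommGroup E] [NormedSpace ℝ E]
    (L : κ → E →L[ℝ] E) (u : ℝ → κ) (Φ : ℝ → E) : Prop where
  measurable : Measurable u
  continuous : Continuous Φ
  eq_add_integral : ∀ t, 0 ≤ t → Φ t = Φ 0 + ∫ s in (0 : ℝ)..t, L (u s) (Φ s)

namespace IsTrajectory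

variable {κ E F : Type*} [MeasurableSpace κ] [MeasurableSingletonClass κ] [Finite κ]
  [NormedAddCommGroup E] [NormedAddCommGroup F] [NormedSpace ℝ F]

section Regularity

variable [NormedSpace ℝ E] {L : κ → E →L[ℝ] E} {u : ℝ → κ} {Φ : ℝ → E}

theorem intervalIntegrable_velocity (h : IsTrajectory L u Φ) (s t : ℝ) :
    IntervalIntegrable (fun r => L (u r) (Φ r)) volume s t :=
  intervalIntegrable_switch h.measurable (fun k => (L k).continuous.comp h.continuous) s t

theorem sub_eq_integral (h : IsTrajectory L u Φ) {s t : ℝ} (hs : 0 ≤ s) (ht : 0 ≤ t) :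
    Φ t - Φ s = ∫ r in s..t, L (u r) (Φ r) := by
  rw [h.eq_add_integral t ht, h.eq_add_integral s hs, add_sub_add_left_eq_sub,
    intervalIntegral.integral_interval_sub_left (h.intervalIntegrable_velocity 0 t)
      (h.intervalIntegrable_velocity 0 s)]

theorem exists_lipschitzOnWith (h : IsTrajectory L u Φ) {S : Set ℝ} [S.OrdConnected]
    (hS : S ⊆ Ici 0) {B : ℝ} (hB : ∀ t ∈ S, ‖Φ t‖ ≤ B) : ∃ K, LipschitzOnWith K Φ S := by
  have := Fintype.ofFinite κ
  refine ⟨_, LipschitzOnWith.of_dist_le' (K := (∑ k, ‖L k‖) * B) fun t ht s hs => ?_⟩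
  rw [dist_eq_norm, h.sub_eq_integral (hS hs) (hS ht), Real.dist_eq]
  refine intervalIntegral.norm_integral_le_of_norm_le_const fun r hr => ?_
  have hrS : ‖Φ r‖ ≤ B := hB r (OrdConnected.uIcc_subset ‹_› hs ht (uIoc_subset_uIcc hr))
  exact (L (u r)).le_of_opNorm_le_of_le
    (Finset.single_le_sum (fun k _ => norm_nonneg (L k)) (Finset.mem_univ _)) hrS

theorem ae_hasDerivAt [CompleteSpace E] (h : IsTrajectory L u Φ) :
    ∀ᵐ t, 0 < t → HasDerivAt Φ (L (u t) (Φ t)) t := by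
  have hloc := locallyIntegrable_switch h.measurable fun k => (L k).continuous.comp h.continuous
  filter_upwards [LocallyIntegrable.ae_hasDerivAt_integral hloc] with t ht hpos
  refine ((ht 0).const_add (Φ 0)).congr_of_eventuallyEq ?_
  filter_upwards [lt_mem_nhds hpos] with r hr
  exact h.eq_add_integral r hr.le

theorem comp_sub_comp_eq_integral [CompleteSpace E] [CompleteSpace F] (h : IsTrajectory L u Φ)
    {W : ℝ × E → F} (hW : ContDiff ℝ 1 W) {s t : ℝ} (hs : 0 ≤ s) (ht : 0 ≤ t) :
    W (t, Φ t) - W (s, Φ s) = ∫ r in s..t, fderiv ℝ W (r, Φ r) (1, L (u r) (Φ r)) := by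
  have hnonneg : uIcc s t ⊆ Ici 0 := fun r hr => (le_min hs ht).trans hr.1
  obtain ⟨B, hB⟩ := (isCompact_uIcc (a := s) (b := t)).exists_bound_of_continuousOn
    h.continuous.continuousOn
  obtain ⟨K, hK⟩ := h.exists_lipschitzOnWith hnonneg hB
  have hgraph := (LipschitzWith.id.lipschitzOnWith (s := uIcc s t)).prodMk hK
  obtain ⟨K', hK'⟩ := (hW.locallyLipschitz.locallyLipschitzOn).exists_lipschitzOnWith_of_compact
    (isCompact_uIcc.image_of_continuousOn hgraph.continuousOn)
  refine (integral_eq_sub_of_lipschitzOnWith (hK'.comp hgraph (mapsTo_image _ _)) ?_ ?_).symm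
  · have hgraph' := continuous_id.prodMk h.continuous
    exact intervalIntegrable_switch h.measurable
      (g := fun k r => fderiv ℝ W (r, Φ r) (1, L k (Φ r)))
      (fun k => ((hW.continuous_fderiv one_ne_zero).comp hgraph').clm_apply
        (continuous_const.prodMk ((L k).continuous.comp h.continuous))) s t
  · filter_upwards [h.ae_hasDerivAt] with r hr hmem
    exact (hW.differentiable one_ne_zero _).hasFDerivAt.comp_hasDerivAt r
      ((hasDerivAt_id r).prodMk (hr ((le_min hs ht).trans_lt hmem.1)))

end Regularity

section Dissipation

variable [InnerProductSpace ℝ E] {L : κ → E →L[ℝ] E} {u : ℝ → κ} {Φ : ℝ → E}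
  {y : E →L[ℝ] F} {δ : ℝ}

theorem norm_sq_sub_norm_sq_eq_integral [CompleteSpace E] (h : IsTrajectory L u Φ) {s t : ℝ}
    (hs : 0 ≤ s) (ht : 0 ≤ t) : ‖Φ t‖ ^ 2 - ‖Φ s‖ ^ 2 = ∫ r in s..t, 2 * ⟪Φ r, L (u r) (Φ r)⟫ := by
  have hW : ContDiff ℝ 1 fun p : ℝ × E => ‖p.2‖ ^ 2 := contDiff_snd.norm_sq ℝ
  rw [h.comp_sub_comp_eq_integral hW hs ht]
  have hderiv (p : ℝ × E) := ((hasFDerivAt_snd (𝕜 := ℝ) (p := p)).norm_sq).fderiv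
  simp [hderiv]

theorem norm_sq_add_integral_le [CompleteSpace E] (h : IsTrajectory L u Φ)
    (hdiss : ∀ k x, ⟪x, L k x⟫ ≤ -(δ * ‖y x‖ ^ 2)) {s t : ℝ} (hs : 0 ≤ s) (hst : s ≤ t) :
    ‖Φ t‖ ^ 2 + 2 * δ * ∫ r in s..t, ‖y (Φ r)‖ ^ 2 ≤ ‖Φ s‖ ^ 2 := by
  have hy : Continuous fun r => -(2 * δ * ‖y (Φ r)‖ ^ 2) := by
    have := h.continuous
    fun_prop
  have hmono := intervalIntegral.integral_mono_on hst
    (intervalIntegrable_switch h.measurable (g := fun k r => 2 * ⟪Φ r, L k (Φ r)⟫)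
      (fun k => continuous_const.mul (h.continuous.inner ((L k).continuous.comp h.continuous))) s t)
    (hy.intervalIntegrable s t) fun r _ => by linarith [hdiss (u r) (Φ r)]
  rw [← h.norm_sq_sub_norm_sq_eq_integral hs (hs.trans hst), intervalIntegral.integral_neg,
    intervalIntegral.integral_const_mul] at hmono
  linarith

theorem norm_le_norm_zero [CompleteSpace E] (h : IsTrajectory L u Φ)
    (hL : ∀ k x, ⟪x, L k x⟫ ≤ 0) {t : ℝ} (ht : 0 ≤ t) : ‖Φ t‖ ≤ ‖Φ 0‖ := by
  have henergy := h.norm_sq_add_integral_le (y := (0 : E →L[ℝ] E)) (δ := 0)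
    (by simpa using hL) le_rfl ht
  exact le_of_sq_le_sq (by simpa using henergy) (norm_nonneg _)

theorem integrableOn_norm_sq_output [CompleteSpace E] (h : IsTrajectory L u Φ) (hδ : 0 < δ)
    (hdiss : ∀ k x, ⟪x, L k x⟫ ≤ -(δ * ‖y x‖ ^ 2)) :
    IntegrableOn (fun t => ‖y (Φ t)‖ ^ 2) (Ioi 0) := by
  have hcont : Continuous fun t => ‖y (Φ t)‖ ^ 2 := (y.continuous.comp h.continuous).norm.pow 2
  refine integrableOn_Ioi_of_intervalIntegral_norm_bounded (‖Φ 0‖ ^ 2 / (2 * δ)) 0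
    (fun T => hcont.integrableOn_Ioc) tendsto_id ?_
  filter_upwards [eventually_ge_atTop 0] with T hT
  rw [le_div_iff₀' (by positivity)]
  have henergy := h.norm_sq_add_integral_le hdiss le_rfl hT
  simp only [norm_pow, norm_norm, id_eq]
  linarith [sq_nonneg ‖Φ T‖]

theorem tendsto_output_zero [ProperSpace E] (h : IsTrajectory L u Φ) (hδ : 0 < δ)
    (hdiss : ∀ k x, ⟪x, L k x⟫ ≤ -(δ * ‖y x‖ ^ 2)) :
    Tendsto (fun t => y (Φ t)) atTop (𝓝 0) := by
  have hL (k : κ) (x : E) : ⟪x, L k x⟫ ≤ 0 := (hdiss k x).trans (neg_nonpos.2 (by positivity))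
  have hB (t : ℝ) (ht : t ∈ Ici 0) : ‖Φ t‖ ≤ ‖Φ 0‖ := h.norm_le_norm_zero hL ht
  obtain ⟨K, hK⟩ := h.exists_lipschitzOnWith subset_rfl hB
  have huc : UniformContinuousOn (fun x => ‖y x‖ ^ 2) (Metric.closedBall 0 ‖Φ 0‖) :=
    (isCompact_closedBall 0 _).uniformContinuousOn_of_continuous
      (y.continuous.norm.pow 2).continuousOn
  have hlim := tendsto_zero_of_uniformContinuousOn_of_integrableOn
    (huc.comp hK.uniformContinuousOn fun t ht => by simpa using hB t ht)
    (h.integrableOn_norm_sq_output hδ hdiss)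
  rw [tendsto_zero_iff_norm_tendsto_zero]
  simpa using hlim.sqrt

end Dissipation

section Asymptotics

variable [NormedSpace ℝ E] [CompleteSpace E] {L : κ → E →L[ℝ] E} {u : ℝ → κ} {Φ : ℝ → E}

theorem mul_le_apply_sub_apply (h : IsTrajectory L u Φ) (ℓ : E →L[ℝ] ℝ) {m s t : ℝ} (hs : 0 ≤ s)
    (hst : s ≤ t) (hm : ∀ r ∈ Icc s t, ∀ k, m ≤ ℓ (L k (Φ r))) :
    (t - s) * m ≤ ℓ (Φ t) - ℓ (Φ s) := by
  have hint := h.intervalIntegrable_velocity s t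
  calc (t - s) * m = ∫ _ in s..t, m := by simp
    _ ≤ ∫ r in s..t, ℓ (L (u r) (Φ r)) := intervalIntegral.integral_mono_on hst
        intervalIntegrable_const ⟨ℓ.integrable_comp hint.1, ℓ.integrable_comp hint.2⟩
        fun r hr => hm r hr (u r)
    _ = ℓ (Φ t) - ℓ (Φ s) := by
        rw [ℓ.intervalIntegral_comp_comm hint, ← h.sub_eq_integral hs (hs.trans hst), map_sub]

theorem exists_apply_nonpos_of_mapClusterPt (h : IsTrajectory L u Φ) {B : ℝ}
    (hB : ∀ t, 0 ≤ t → ‖Φ t‖ ≤ B) {ℓ : E →L[ℝ] ℝ} {c : ℝ}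
    (hℓ : Tendsto (fun t => ℓ (Φ t)) atTop (𝓝 c)) {x : E} (hx : MapClusterPt x atTop Φ) :
    ∃ k, ℓ (L k x) ≤ 0 := by
  by_contra! hpos
  -- Near `x` every mode would raise `ℓ` at rate `m`, so each visit would gain a fixed amount.
  obtain ⟨m, hmx, hm⟩ : ∃ m, (∀ k, m < ℓ (L k x)) ∧ 0 < m :=
    ((eventually_all.2 fun k => (gt_mem_nhds (hpos k)).filter_mono nhdsWithin_le_nhds).and
      self_mem_nhdsWithin).exists (f := 𝓝[>] 0)
  obtain ⟨ρ, hρ, hball⟩ : ∃ ρ > 0, ∀ z ∈ Metric.ball x ρ, ∀ k, m < ℓ (L k z) := by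
    refine Metric.eventually_nhds_iff_ball.1 (eventually_all.2 fun k => ?_)
    exact ((ℓ.comp (L k)).continuous.tendsto x).eventually (lt_mem_nhds (hmx k))
  obtain ⟨K, hK⟩ := h.exists_lipschitzOnWith subset_rfl hB
  obtain ⟨η, hη, hKη⟩ := exists_pos_mul_lt (half_pos hρ) K
  have hgain := ((hℓ.comp (tendsto_atTop_add_const_right _ η tendsto_id)).sub hℓ).eventually
    (gt_mem_nhds (by simpa using mul_pos hη hm))
  obtain ⟨t, hnear, hlt, ht⟩ := ((hx.frequently (Metric.ball_mem_nhds x (half_pos hρ)))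
    |>.and_eventually (hgain.and (eventually_ge_atTop 0))).exists
  have hstay (r : ℝ) (hr : r ∈ Icc t (t + η)) : Φ r ∈ Metric.ball x ρ := by
    have hdist := hK.dist_le_mul r (ht.trans hr.1) t ht
    have hrt : dist r t ≤ η := by
      rw [Real.dist_eq, abs_of_nonneg (sub_nonneg.2 hr.1)]
      linarith [hr.2]
    calc dist (Φ r) x ≤ dist (Φ r) (Φ t) + dist (Φ t) x := dist_triangle _ _ _
      _ < ρ / 2 + ρ / 2 := add_lt_add ((hdist.trans (by gcongr)).trans_lt hKη) hnear
      _ = ρ := add_halves ρ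
  have hpush := h.mul_le_apply_sub_apply ℓ ht (le_add_of_nonneg_right hη.le)
    fun r hr k => (hball _ (hstay r hr) k).le
  rw [add_sub_cancel_left] at hpush
  exact hlt.not_ge hpush

theorem exp_mul_sub_exp_mul_eq_integral (h : IsTrajectory L u Φ) (Z : E →L[ℝ] ℂ) (ω : ℝ) {s t : ℝ}
    (hs : 0 ≤ s) (ht : 0 ≤ t) :
    Complex.exp (-(Complex.I * ω * t)) * Z (Φ t) - Complex.exp (-(Complex.I * ω * s)) * Z (Φ s) =
      ∫ r in s..t, Complex.exp (-(Complex.I * ω * r)) *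
        (Z (L (u r) (Φ r)) - Complex.I * ω * Z (Φ r)) := by
  let phase : ℝ × E →L[ℝ] ℂ := -(Complex.I * ω) • Complex.ofRealCLM ∘L .fst ℝ ℝ E
  let W (p : ℝ × E) : ℂ := Complex.exp (phase p) * Z p.2
  have hW : ContDiff ℝ 1 W := phase.contDiff.cexp.mul (Z.contDiff.comp contDiff_snd)
  have hderiv (p : ℝ × E) : HasFDerivAt W _ p :=
    phase.hasFDerivAt.cexp.mul (Z.comp (.snd ℝ ℝ E)).hasFDerivAt
  convert h.comp_sub_comp_eq_integral hW hs ht using 1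
  · simp [W, phase]
  · congr 1 with r
    simp only [(hderiv _).fderiv, phase, _root_.add_apply, _root_.smul_apply,
      ContinuousLinearMap.comp_apply, ContinuousLinearMap.coe_fst', ContinuousLinearMap.coe_snd',
      Complex.ofRealCLM_apply, Complex.ofReal_one, smul_eq_mul, mul_one, neg_mul, mul_neg]
    ring

theorem tendsto_shift_sub_exp_mul (h : IsTrajectory L u Φ) {y : E →L[ℝ] F}
    (hy : Tendsto (fun t => y (Φ t)) atTop (𝓝 0)) {Z : E →L[ℝ] ℂ} {ω : ℝ}
    (hZ : ∀ k x, ‖Z (L k x) - Complex.I * ω * Z x‖ ≤ ‖y x‖) {τ : ℝ} (hτ : 0 ≤ τ) :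
    Tendsto (fun t => Z (Φ (t + τ)) - Complex.exp (Complex.I * ω * τ) * Z (Φ t)) atTop (𝓝 0) := by
  refine Metric.tendsto_nhds.2 fun ε hε => ?_
  obtain ⟨c, hc, hcε⟩ := exists_pos_mul_lt hε τ
  rw [mul_comm] at hcε
  have hysmall := hy.eventually (Metric.ball_mem_nhds 0 hc)
  filter_upwards [eventually_ge_atTop 0, eventually_forall_ge_atTop.2 hysmall] with t ht hyt
  have hunit (r : ℝ) : ‖Complex.exp (-(Complex.I * ω * r))‖ = 1 := by
    simp [Complex.norm_exp]
  have hbound : ‖∫ r in t..t + τ, Complex.exp (-(Complex.I * ω * r)) *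
      (Z (L (u r) (Φ r)) - Complex.I * ω * Z (Φ r))‖ ≤ c * |t + τ - t| := by
    refine intervalIntegral.norm_integral_le_of_norm_le_const fun r hr => ?_
    rw [uIoc_of_le (le_add_of_nonneg_right hτ)] at hr
    rw [norm_mul, hunit, one_mul]
    exact (hZ _ _).trans (by simpa using (hyt r hr.1.le).le)
  rw [← h.exp_mul_sub_exp_mul_eq_integral Z ω ht (add_nonneg ht hτ), add_sub_cancel_left,
    abs_of_nonneg hτ] at hbound
  refine lt_of_eq_of_lt ?_ (hbound.trans_lt hcε)
  rw [dist_zero_right, ← one_mul ‖Z _ - _‖, ← hunit (t + τ), ← norm_mul, mul_sub, ← mul_assoc,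
    ← Complex.exp_add]
  push_cast
  ring_nf

end Asymptotics

end IsTrajectory

section Torus

variable {q : ℕ}

/-- The state space `ℝ^{2q+1}`: the pairs `(x_{j,0}, x_{j,1})` for `j < q`, then the output
coordinate. -/
abbrev TorusState (q : ℕ) : Type := EuclideanSpace ℝ ((Fin q × Fin 2) ⊕ Fin 1)

/-- The mode `[[A, -C_kᵀ], [C_k, -d_k]]`, where `C_k` picks the `k`-th entry of each pair. -/
def torusMatrix (a : Fin q → ℝ) (d : Fin 2 → ℝ) (k : Fin 2) :
    Matrix ((Fin q × Fin 2) ⊕ Fin 1) ((Fin q × Fin 2) ⊕ Fin 1) ℝ :=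
  let C : Matrix (Fin 1) (Fin q × Fin 2) ℝ := .of fun _ p => if p.2 = k then 1 else 0
  .fromBlocks (blockDiagRot a) (-Cᵀ) C (.of fun _ _ => -d k)

/-- The vector field `x ↦ B_k x`. -/
def torusField (a : Fin q → ℝ) (d : Fin 2 → ℝ) (k : Fin 2) : TorusState q →L[ℝ] TorusState q :=
  (torusMatrix a d k).toEuclideanLin.toContinuousLinearMap

/-- The last coordinate, through which all the dissipation happens. -/
def torusOutput : TorusState q →L[ℝ] ℝ :=
  EuclideanSpace.proj (Sum.inr 0)

/-- The pair `(x_{j,0}, x_{j,1})` as the complex number `x_{j,0} + i x_{j,1}`, on which `A` acts as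
multiplication by `i a_j`. -/
def torusPhasor (j : Fin q) : TorusState q →L[ℝ] ℂ :=
  Complex.equivRealProdCLM.symm.toContinuousLinearMap ∘L
    (EuclideanSpace.proj (Sum.inl (j, 0))).prod (EuclideanSpace.proj (Sum.inl (j, 1)))

theorem torusPhasor_apply (j : Fin q) (x : TorusState q) :
    torusPhasor j x = ⟨x (.inl (j, 0)), x (.inl (j, 1))⟩ :=
  rfl

theorem eq_zero_of_torusOutput_of_torusPhasor {x : TorusState q} (hy : torusOutput x = 0)
    (hz : ∀ j, torusPhasor j x = 0) : x = 0 := by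
  ext i
  rcases i with ⟨j, k⟩ | i
  · fin_cases k
    · exact congrArg Complex.re (hz j)
    · exact congrArg Complex.im (hz j)
  · rwa [Subsingleton.elim i 0]

variable (a : Fin q → ℝ) (d : Fin 2 → ℝ) (x : TorusState q)

theorem torusOutput_torusField (k : Fin 2) :
    torusOutput (torusField a d k x) = ∑ j, x (.inl (j, k)) - d k * torusOutput x := by
  simp [torusOutput, torusField, torusMatrix, Matrix.toLpLin_apply, Matrix.mulVec, dotProduct,
    Fintype.sum_prod_type, sub_eq_add_neg]

theorem torusField_inl_zero (k : Fin 2) (j : Fin q) :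
    torusField a d k x (.inl (j, 0)) =
      -(a j * x (.inl (j, 1))) - if k = 0 then torusOutput x else 0 := by
  simp [torusOutput, torusField, torusMatrix, blockDiagRot, Matrix.toLpLin_apply, Matrix.mulVec,
    dotProduct, Fintype.sum_prod_type, sub_eq_add_neg, eq_comm]
  

theorem torusField_inl_one (k : Fin 2) (j : Fin q) :
    torusField a d k x (.inl (j, 1)) =
      a j * x (.inl (j, 0)) - if k = 1 then torusOutput x else 0 := by
  simp [torusOutput, torusField, torusMatrix, blockDiagRot, Matrix.toLpLin_apply, Matrix.mulVec,
    dotProduct, Fintype.sum_prod_type, sub_eq_add_neg, eq_comm]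

theorem inner_torusField (k : Fin 2) : ⟪x, torusField a d k x⟫ = -(d k * torusOutput x ^ 2) := by
  have hy : torusField a d k x (.inr 0) = _ := torusOutput_torusField a d x k
  rw [PiLp.inner_apply, Fintype.sum_sum_type, Fintype.sum_prod_type]
  simp only [Fin.sum_univ_two, Fin.sum_univ_one, hy, torusField_inl_zero, torusField_inl_one]
  have hpair (j : Fin q) :
      ⟪x (.inl (j, 0)), -(a j * x (.inl (j, 1))) - if k = 0 then torusOutput x else 0⟫ +
        ⟪x (.inl (j, 1)), a j * x (.inl (j, 0)) - if k = 1 then torusOutput x else 0⟫ =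
      -(x (.inl (j, k)) * torusOutput x) := by
    fin_cases k <;>
      simp only [Fin.zero_eta, Fin.mk_one, zero_ne_one, one_ne_zero, if_true, if_false, sub_zero,
        RCLike.inner_apply, Real.ringHom_apply] <;>
      ring
  have hout : ⟪x (.inr 0), ∑ j, x (.inl (j, k)) - d k * torusOutput x⟫ =
      (∑ j, x (.inl (j, k)) - d k * torusOutput x) * torusOutput x := rfl
  rw [Finset.sum_congr rfl fun j _ => hpair j, hout, Finset.sum_neg_distrib, ← Finset.sum_mul]
  ring

theorem torusPhasor_torusField (k : Fin 2) (j : Fin q) :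
    torusPhasor j (torusField a d k x) =
      Complex.I * a j * torusPhasor j x - torusOutput x * ![1, Complex.I] k := by
  rw [torusPhasor_apply, torusPhasor_apply, torusField_inl_zero, torusField_inl_one]
  fin_cases k <;> apply Complex.ext <;> simp

theorem norm_torusPhasor_torusField_sub_le (k : Fin 2) (j : Fin q) :
    ‖torusPhasor j (torusField a d k x) - Complex.I * a j * torusPhasor j x‖ ≤
      ‖torusOutput x‖ := by
  rw [torusPhasor_torusField, sub_sub_cancel_left]
  fin_cases k <;> simp

variable {x}

theorem re_mul_torusOutput_torusField_pos (hy : torusOutput x = 0)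
    (hs : 0 < ((∑ j, torusPhasor j x) * ∑ j, torusPhasor j x).im) (k : Fin 2) :
    0 < (∑ j, torusPhasor j x).re * torusOutput (torusField a d k x) := by
  have hre : (∑ j, torusPhasor j x).re = ∑ j, x (.inl (j, 0)) := Complex.re_sum _ _
  have him : (∑ j, torusPhasor j x).im = ∑ j, x (.inl (j, 1)) := Complex.im_sum _ _
  rw [torusOutput_torusField, hy, mul_zero, sub_zero]
  rw [Complex.mul_im, mul_comm (Complex.im _), ← two_mul, mul_pos_iff_of_pos_left two_pos] at hs
  fin_cases k
  · simpa [← hre] using mul_self_pos.2 (left_ne_zero_of_mul hs.ne')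
  · simpa [← him] using hs

variable {a d} {u : ℝ → Fin 2} {Φ : ℝ → TorusState q}

theorem exists_mapClusterPt_rotate (h : IsTrajectory (torusField a d) u Φ) {B : ℝ}
    (hB : ∀ t, 0 ≤ t → ‖Φ t‖ ≤ B) (hy : Tendsto (fun t => torusOutput (Φ t)) atTop (𝓝 0))
    (hx : MapClusterPt x atTop Φ) {τ : ℝ} (hτ : 0 ≤ τ) :
    ∃ x', MapClusterPt x' atTop Φ ∧
      ∀ j, torusPhasor j x' = Complex.exp (Complex.I * a j * τ) * torusPhasor j x := by
  have hball : ∀ᶠ t in atTop, Φ t ∈ Metric.closedBall 0 B := by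
    filter_upwards [eventually_ge_atTop 0] with t ht
    simpa using hB t ht
  obtain ⟨x', hx', hxx'⟩ := exists_mapClusterPt_prodMk_shift (isCompact_closedBall 0 B) hball hx τ
  refine ⟨x', hx', fun j => ?_⟩
  have hrot := h.tendsto_shift_sub_exp_mul hy
    (fun k x => norm_torusPhasor_torusField_sub_le a d x k j) hτ
  let g (p : TorusState q × TorusState q) : ℂ :=
    torusPhasor j p.2 - Complex.exp (Complex.I * a j * τ) * torusPhasor j p.1
  have hg : Continuous g := by fun_prop
  have hzero : g (x, x') = 0 := apply_eq_of_mapClusterPt_of_tendsto hxx' hg.continuousAt hrot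
  exact sub_eq_zero.1 hzero

theorem eq_zero_of_mapClusterPt (h : IsTrajectory (torusField a d) u Φ)
    (habs : Function.Injective fun j => |a j|) (hne : ∀ j, a j ≠ 0) {B : ℝ}
    (hB : ∀ t, 0 ≤ t → ‖Φ t‖ ≤ B) (hy : Tendsto (fun t => torusOutput (Φ t)) atTop (𝓝 0))
    (hx : MapClusterPt x atTop Φ) : x = 0 := by
  have hout {z : TorusState q} (hz : MapClusterPt z atTop Φ) : torusOutput z = 0 :=
    apply_eq_of_mapClusterPt_of_tendsto hz torusOutput.continuous.continuousAt hy
  by_contra hx0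
  have hz : (fun j => torusPhasor j x) ≠ 0 := fun hz =>
    hx0 (eq_zero_of_torusOutput_of_torusPhasor (hout hx) (congrFun hz))
  obtain ⟨τ, hτ, him⟩ := exists_im_expSum_sq_pos habs hne hz
  obtain ⟨x', hx', hphase⟩ := exists_mapClusterPt_rotate h hB hy hx hτ
  have hsum : ∑ j, torusPhasor j x' = expSum a (fun j => torusPhasor j x) τ :=
    Finset.sum_congr rfl fun j _ => (hphase j).trans (mul_comm _ _)
  rw [← hsum] at him
  obtain ⟨k, hk⟩ := h.exists_apply_nonpos_of_mapClusterPt hB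
    (ℓ := (∑ j, torusPhasor j x').re • torusOutput) (hy.const_mul _) hx'
  exact hk.not_gt (re_mul_torusOutput_torusField_pos a d (hout hx') him k)

theorem tendsto_zero_of_isTrajectory_torusField (h : IsTrajectory (torusField a d) u Φ)
    (habs : Function.Injective fun j => |a j|) (hne : ∀ j, a j ≠ 0) (hd : ∀ k, 0 < d k) :
    Tendsto Φ atTop (𝓝 0) := by
  have hdiss (k : Fin 2) (x : TorusState q) :
      ⟪x, torusField a d k x⟫ ≤ -(min (d 0) (d 1) * ‖torusOutput x‖ ^ 2) := by
    rw [inner_torusField, Real.norm_eq_abs, sq_abs]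
    gcongr
    fin_cases k <;> simp
  have hδ : 0 < min (d 0) (d 1) := lt_min (hd 0) (hd 1)
  have hy := h.tendsto_output_zero hδ hdiss
  have hB (t : ℝ) (ht : 0 ≤ t) : ‖Φ t‖ ≤ ‖Φ 0‖ :=
    h.norm_le_norm_zero (fun k x => (hdiss k x).trans (neg_nonpos.2 (by positivity))) ht
  refine (isCompact_closedBall 0 ‖Φ 0‖).tendsto_nhds_of_unique_mapClusterPt ?_
    fun x _ hx => eq_zero_of_mapClusterPt h habs hne hB hy hx
  filter_upwards [eventually_ge_atTop 0] with t ht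
  simpa using hB t ht

theorem torusMatrix_eq_vecCons (a : Fin q → ℝ) (d₀ d₁ : ℝ) :
    torusMatrix a ![d₀, d₁] =
      ![.fromBlocks (blockDiagRot a) (-rowC₀ᵀ) rowC₀ (.of fun _ _ => -d₀),
        .fromBlocks (blockDiagRot a) (-rowC₁ᵀ) rowC₁ (.of fun _ _ => -d₁)] := by
  funext k
  fin_cases k <;> rfl

end Torus

theorem injective_abs_of_linearIndependent {ι R M : Type*} [Ring R] [Nontrivial R] [AddCommGroup M]
    [LinearOrder M] [Module R M] {a : ι → M} (ha : LinearIndependent R a) :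
    Function.Injective fun i => |a i| := by
  intro i j hij
  rcases abs_eq_abs.1 hij with h | h
  · exact ha.injective h
  · by_contra hne
    have hpair := (LinearIndepOn.pair_iff a hne).1 (ha.linearIndepOn _) (1 : R) 1 (by simp [h])
    exact one_ne_zero hpair.1

theorem isGUAS_torus_example_general {q : ℕ} (a : Fin q → ℝ)
    (habs : Function.Injective fun j => |a j|) (hne : ∀ j, a j ≠ 0) (d₀ d₁ : ℝ) (hd₀ : 0 < d₀)
    (hd₁ : 0 < d₁) :
    IsGUAS
      (Matrix.fromBlocks (blockDiagRot a) (-rowC₀ᵀ) rowC₀ (Matrix.of fun _ _ => -d₀))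
      (Matrix.fromBlocks (blockDiagRot a) (-rowC₁ᵀ) rowC₁ (Matrix.of fun _ _ => -d₁)) := by
  intro u hu X Φ hΦ hsol
  have hX : Φ 0 = X := by simpa using hsol 0 le_rfl
  rw [← torusMatrix_eq_vecCons, ← hX] at hsol
  have htraj : IsTrajectory (torusField a ![d₀, d₁]) u Φ := ⟨hu, hΦ, hsol⟩
  exact tendsto_zero_of_isTrajectory_torusField htraj habs hne (Fin.forall_fin_two.2 ⟨hd₀, hd₁⟩)

/-- If `q ≥ 1`, `a₁, …, a_q` are rationally independent and
`d₀, d₁ > 0`, then the switched system defined by the `(2q+1)×(2q+1)` block matrices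
`B₀ = [[A, -C₀ᵀ],[C₀, -d₀]]` and `B₁ = [[A, -C₁ᵀ],[C₁, -d₁]]` is GUAS. -/
theorem isGUAS_torus_example {q : ℕ} (hq : 1 ≤ q) (a : Fin q → ℝ)
    (ha : LinearIndependent ℚ a) (d₀ d₁ : ℝ) (hd₀ : 0 < d₀) (hd₁ : 0 < d₁) :
    IsGUAS
      (Matrix.fromBlocks (blockDiagRot a) (-rowC₀ᵀ) rowC₀ (Matrix.of fun _ _ => -d₀))
      (Matrix.fromBlocks (blockDiagRot a) (-rowC₁ᵀ) rowC₁ (Matrix.of fun _ _ => -d₁)) :=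
  isGUAS_torus_example_general a (injective_abs_of_linearIndependent ha) ha.ne_zero d₀ d₁ hd₀ hd₁

end
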